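/- Let u be a nonconstant harmonic polynomial on ℝ² of degree d, and let k be the (finite) number of connected components of {u ≠ 0}. Then k/2 ≤ d ≤ k − 1, and both equalities hold simultaneously if and only if d = 1 (i.e. u is an affine function). -/

import Mathlib

open MeasureTheory Metric Filter

/-- The set of connected components of a subset `S` of a topological space. -/
def nodalComponents {X : Type*} [TopologicalSpace X] (S : Set X) : Set (Set X) :=
  {C | ∃ x ∈ S, connectedComponentIn S x = C}

/-- A polynomial `P ∈ ℝ[x₁,…,xₙ]` is harmonic if `∑ i, ∂²P/∂xᵢ²` is the zero polynomial. -/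
def IsHarmonicPoly {n : ℕ} (P : MvPolynomial (Fin n) ℝ) : Prop :=
  ∑ i, MvPolynomial.pderiv i (MvPolynomial.pderiv i P) = 0

/-- The polynomial function on ℝⁿ associated with `P ∈ ℝ[x₁,…,xₙ]`. -/
noncomputable def polyFun {n : ℕ} (P : MvPolynomial (Fin n) ℝ)
    (x : EuclideanSpace ℝ (Fin n)) : ℝ :=
  MvPolynomial.eval (fun i => x i) P

/-
A harmonic polynomial of degree `d` on the plane is `Re f` for a complex polynomial `f` of degree
`d`. Each component of `{Re f > 0}` is mapped by `f` onto the right half-plane, hence contains one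
of the at most `d` roots of `f = 1`; with the analogous bound for `{Re f < 0}` this gives `k ≤ 2d`.
For the lower bound, let a disc in the half-plane grow from a point `c` of the half-plane until it
fills it. The preimage under `f` starts as the fiber over `c`, with `d` points up to multiplicity,
and its components can merge only at critical points of `f`, a critical point of multiplicity `m`
lowering their number by at most `m`. The two half-planes together contain critical points of total
multiplicity at most `d - 1`, so `k ≥ 2d - (d - 1)`.
-/

open Module Polynomial Topology

section Components

variable {X Y : Type*} [TopologicalSpace X] [TopologicalSpace Y]

lemma connectedComponentIn_union_of_disjoint {U V : Set X} (hU : IsOpen U) (hV : IsOpen V)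
    (hUV : Disjoint U V) {x : X} (hx : x ∈ U) :
    connectedComponentIn (U ∪ V) x = connectedComponentIn U x := by
  have hx' : x ∈ U ∪ V := Or.inl hx
  refine Set.Subset.antisymm ?_ (connectedComponentIn_mono _ Set.subset_union_left)
  refine isPreconnected_connectedComponentIn.subset_connectedComponentIn
    (mem_connectedComponentIn hx') ?_
  exact isPreconnected_connectedComponentIn.subset_left_of_subset_union hU hV hUV
    (connectedComponentIn_subset _ _) ⟨x, mem_connectedComponentIn hx', hx⟩

lemma nodalComponents_eq_image (S : Set X) :
    nodalComponents S = connectedComponentIn S '' S :=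
  rfl

lemma nodalComponents_union_of_disjoint {U V : Set X} (hU : IsOpen U) (hV : IsOpen V)
    (hUV : Disjoint U V) :
    nodalComponents (U ∪ V) = nodalComponents U ∪ nodalComponents V := by
  have hleft := Set.image_congr fun x hx => connectedComponentIn_union_of_disjoint hU hV hUV hx
  have hright := Set.image_congr fun x hx =>
    connectedComponentIn_union_of_disjoint hV hU hUV.symm hx
  rw [Set.union_comm V U] at hright
  simp only [nodalComponents_eq_image, Set.image_union, hleft, hright]

lemma disjoint_nodalComponents {U V : Set X} (hUV : Disjoint U V) :
    Disjoint (nodalComponents U) (nodalComponents V) := by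
  rw [Set.disjoint_left]
  rintro _ ⟨x, hx, rfl⟩ ⟨y, -, hxy⟩
  have hxV : x ∈ V := connectedComponentIn_subset _ _ (hxy ▸ mem_connectedComponentIn hx)
  exact Set.disjoint_left.1 hUV hx hxV

lemma nodalComponents_image_homeomorph (e : X ≃ₜ Y) (S : Set X) :
    nodalComponents (e '' S) = (e '' ·) '' nodalComponents S := by
  simp only [nodalComponents_eq_image, Set.image_image]
  exact Set.image_congr fun x hx => (e.image_connectedComponentIn hx).symm

lemma image_connectedComponentIn_preimage [LocallyConnectedSpace X] {f : X → Y}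
    (hf : Continuous f) (hopen : IsOpenMap f) (hclosed : IsClosedMap f) {V : Set Y}
    (hV : IsOpen V) (hVc : IsPreconnected V) {x : X} (hx : f x ∈ V) :
    f '' connectedComponentIn (f ⁻¹' V) x = V := by
  set C := connectedComponentIn (f ⁻¹' V) x
  have hxC : x ∈ C := mem_connectedComponentIn hx
  have hCV : C ⊆ f ⁻¹' V := connectedComponentIn_subset _ _
  have hC : IsOpen C := (hV.preimage hf).connectedComponentIn
  refine (Set.image_subset_iff.2 hCV).antisymm
    (hVc.subset_of_closure_inter_subset (hopen C hC) ⟨f x, hx, x, hxC, rfl⟩ ?_)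
  rintro _ ⟨hv, hvV⟩
  obtain ⟨z, hz, rfl⟩ := (hclosed.closure_image_eq_of_continuous hf C).subset hv
  have hzC : IsPreconnected (insert z C) :=
    isPreconnected_connectedComponentIn.subset_closure (Set.subset_insert _ _)
      (Set.insert_subset hz subset_closure)
  exact ⟨z, hzC.subset_connectedComponentIn (Set.mem_insert_of_mem _ hxC)
    (Set.insert_subset hvV hCV) (Set.mem_insert _ _), rfl⟩

lemma isCompact_connectedComponentIn [T2Space X] {K : Set X} (hK : IsCompact K) (x : X) :
    IsCompact (connectedComponentIn K x) := by
  rcases em (x ∈ K) with hx | hx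
  · refine hK.of_isClosed_subset (isClosed_of_closure_subset ?_) (connectedComponentIn_subset _ _)
    exact isPreconnected_connectedComponentIn.closure.subset_connectedComponentIn
      (subset_closure (mem_connectedComponentIn hx))
      (hK.isClosed.closure_subset_iff.2 (connectedComponentIn_subset _ _))
  · rw [connectedComponentIn_eq_empty hx]
    exact isCompact_empty

lemma isPreconnected_iInter_of_directed [T2Space X] {ι : Type*} [Nonempty ι] {K : ι → Set X}
    (hdir : Directed (· ⊇ ·) K) (hcomp : ∀ i, IsCompact (K i)) (hconn : ∀ i, IsPreconnected (K i)) :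
    IsPreconnected (⋂ i, K i) := by
  have hI : IsCompact (⋂ i, K i) := (hcomp (Classical.arbitrary ι)).of_isClosed_subset
    (isClosed_iInter fun i => (hcomp i).isClosed) (Set.iInter_subset _ _)
  rw [isPreconnected_iff_subset_of_fully_disjoint_closed hI.isClosed]
  intro u v hu hv huv hdisj
  obtain ⟨U, V, hU, hV, huU, hvV, hUV⟩ := SeparatedNhds.of_isCompact_isCompact
    (hI.inter_right hu) (hI.inter_right hv)
    (hdisj.mono Set.inter_subset_right Set.inter_subset_right)
  have hsub : ⋂ i, K i ⊆ U ∪ V := fun x hx =>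
    (huv hx).imp (fun h => huU ⟨hx, h⟩) (fun h => hvV ⟨hx, h⟩)
  obtain ⟨i, hi⟩ := exists_subset_nhds_of_isCompact hdir hcomp
    fun x hx => (hU.union hV).mem_nhds (hsub hx)
  have hIK : ⋂ i, K i ⊆ K i := Set.iInter_subset _ i
  refine ((hconn i).subset_or_subset hU hV hUV hi).imp (fun h x hx => ?_) (fun h x hx => ?_)
  · exact (huv hx).resolve_right fun hxv => Set.disjoint_left.1 hUV (h (hIK hx)) (hvV ⟨hx, hxv⟩)
  · exact (huv hx).resolve_left fun hxu => Set.disjoint_left.1 hUV (huU ⟨hx, hxu⟩) (h (hIK hx))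

lemma exists_mem_connectedComponentIn_of_mem_iUnion [LocallyConnectedSpace X] {ι : Type*}
    {U : ι → Set X} (hdir : Directed (· ⊆ ·) U) (hU : ∀ i, IsOpen (U i)) {x y : X}
    (hxy : y ∈ connectedComponentIn (⋃ i, U i) x) : ∃ i, y ∈ connectedComponentIn (U i) x := by
  have hx : x ∈ ⋃ i, U i := connectedComponentIn_nonempty_iff.1 ⟨y, hxy⟩
  refine isPreconnected_connectedComponentIn.induction₂
    (fun p q => ∃ i, q ∈ connectedComponentIn (U i) p) ?_ ?_ ?_ (mem_connectedComponentIn hx) hxy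
  · intro p hp
    obtain ⟨i, hi⟩ := Set.mem_iUnion.1 (connectedComponentIn_subset _ _ hp)
    filter_upwards [mem_nhdsWithin_of_mem_nhds ((hU i).connectedComponentIn.mem_nhds
      (mem_connectedComponentIn hi))] with q hq using ⟨i, hq⟩
  · rintro p q s - - - ⟨i, hi⟩ ⟨j, hj⟩
    obtain ⟨k, hik, hjk⟩ := hdir i j
    refine ⟨k, ?_⟩
    rw [connectedComponentIn_eq (connectedComponentIn_mono p hik hi)]
    exact connectedComponentIn_mono q hjk hj
  · rintro p q - - ⟨i, hi⟩
    refine ⟨i, ?_⟩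
    rw [← connectedComponentIn_eq hi]
    exact mem_connectedComponentIn (connectedComponentIn_nonempty_iff.1 ⟨q, hi⟩)

lemma exists_notMem_connectedComponentIn_of_iInter [T2Space X] {ι : Type*} [Nonempty ι]
    {K : ι → Set X} (hdir : Directed (· ⊇ ·) K) (hK : ∀ i, IsCompact (K i)) {x y : X}
    (hx : ∀ i, x ∈ K i) (hxy : y ∉ connectedComponentIn (⋂ i, K i) x) :
    ∃ i, y ∉ connectedComponentIn (K i) x := by
  contrapose! hxy
  have hconn : IsPreconnected (⋂ i, connectedComponentIn (K i) x) :=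
    isPreconnected_iInter_of_directed
      (hdir.mono_comp (· ⊇ ·) (g := (connectedComponentIn · x))
        fun _ _ h => connectedComponentIn_mono x h)
      (fun i => isCompact_connectedComponentIn (hK i) x)
      (fun i => isPreconnected_connectedComponentIn)
  exact hconn.subset_connectedComponentIn
    (Set.mem_iInter.2 fun i => mem_connectedComponentIn (hx i))
    (Set.iInter_mono fun i => connectedComponentIn_subset _ _) (Set.mem_iInter.2 hxy)

lemma eq_of_eventuallyConst_nhdsWithin {α : Type*} {U S : Set X} (hS : IsPreconnected S)
    (hSU : S ⊆ closure U) {g : X → α} (hg : ∀ p ∈ S, ∃ a, ∀ᶠ z in 𝓝[U] p, g z = a)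
    {x y : X} (hx : x ∈ S ∩ U) (hy : y ∈ S ∩ U) : g x = g y := by
  have : Nonempty α := ⟨g x⟩
  choose! v hv using hg
  have hvg : ∀ z ∈ S ∩ U, v z = g z := fun z hz => ((hv z hz.1).self_of_nhdsWithin hz.2).symm
  rw [← hvg x hx, ← hvg y hy]
  refine hS.induction₂ (fun p q => v p = v q) ?_ (fun _ _ _ _ _ _ => Eq.trans)
    (fun _ _ _ _ => Eq.symm) hx.1 hy.1
  intro p hp
  have hnear : ∀ᶠ q in 𝓝[S] p, ∀ᶠ z in 𝓝[U] q, g z = v p :=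
    nhdsWithin_le_nhds (eventually_nhds_nhdsWithin.2 (hv p hp))
  filter_upwards [hnear, self_mem_nhdsWithin] with q hq hqS
  have : (𝓝[U] q).NeBot := mem_closure_iff_nhdsWithin_neBot.1 (hSU hqS)
  obtain ⟨z, hzp, hzq⟩ := (hq.and (hv q hqS)).exists
  exact hzp.symm.trans hzq

end Components

section ConstOnComponents

variable {X : Type*} [TopologicalSpace X]

/-- The real functions on a finite sample `F` that agree at any two points of `F` lying in a common
component of `S`. Its dimension counts the components of `S` that meet `F`, and the inclusions
between these spaces record how components merge as `S` grows. -/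
def constOnComponents (F : Finset X) (S : Set X) : Submodule ℝ (F → ℝ) where
  carrier := {g | Function.FactorsThrough g fun x : F => connectedComponentIn S (x : X)}
  add_mem' hg hg' _ _ h := congrArg₂ (· + ·) (hg h) (hg' h)
  zero_mem' _ _ _ := rfl
  smul_mem' c _ hg _ _ h := congrArg (c • ·) (hg h)

lemma finrank_constOnComponents (F : Finset X) (S : Set X) :
    finrank ℝ (constOnComponents F S) = (connectedComponentIn S '' F).ncard := by
  let q : F → connectedComponentIn S '' (F : Set X) :=
    fun x => ⟨connectedComponentIn S x, Set.mem_image_of_mem _ x.2⟩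
  have hq : Function.Surjective q := by
    rintro ⟨_, x, hx, rfl⟩
    exact ⟨⟨x, hx⟩, rfl⟩
  have hrange : constOnComponents F S = LinearMap.range (LinearMap.funLeft ℝ ℝ q) := by
    ext g
    refine ⟨fun hg => ?_, ?_⟩
    · have hgq : Function.FactorsThrough g q := fun x y h => hg (congrArg Subtype.val h)
      exact ⟨Function.extend q g fun _ => (0 : ℝ), funext (hgq.extend_apply fun _ => (0 : ℝ))⟩
    · rintro ⟨h, rfl⟩ x y hxy
      exact congrArg h (Subtype.ext hxy)
  have : Finite (connectedComponentIn S '' (F : Set X)) := (F.finite_toSet.image _).to_subtype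
  have := Fintype.ofFinite (connectedComponentIn S '' (F : Set X))
  rw [hrange, LinearMap.finrank_range_of_inj (LinearMap.funLeft_injective_of_surjective ℝ ℝ q hq),
    finrank_fintype_fun_eq_card, ← Nat.card_eq_fintype_card, Nat.card_coe_set_eq]

lemma nodalComponents_eq_image_of_meets {F S : Set X} (hFS : F ⊆ S)
    (hmeet : ∀ z ∈ S, ∃ x ∈ F, z ∈ connectedComponentIn S x) :
    nodalComponents S = connectedComponentIn S '' F := by
  refine Set.Subset.antisymm ?_ (Set.image_mono hFS)
  rintro _ ⟨z, hz, rfl⟩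
  obtain ⟨x, hx, hzx⟩ := hmeet z hz
  exact ⟨x, hx, connectedComponentIn_eq hzx⟩

lemma constOnComponents_le {F : Finset X} {S S' : Set X} (hF : ↑F ⊆ S)
    (h : ∀ x ∈ F, ∀ y ∈ F, y ∈ connectedComponentIn S x → y ∈ connectedComponentIn S' x) :
    constOnComponents F S' ≤ constOnComponents F S := by
  intro g hg x y hxy
  have hyx : (y : X) ∈ connectedComponentIn S x := by
    rw [show connectedComponentIn S (x : X) = connectedComponentIn S y from hxy]
    exact mem_connectedComponentIn (hF y.2)
  exact hg (connectedComponentIn_eq (h x x.2 y y.2 hyx))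

lemma constOnComponents_anti {F : Finset X} {S S' : Set X} (hF : ↑F ⊆ S) (hSS' : S ⊆ S') :
    constOnComponents F S' ≤ constOnComponents F S :=
  constOnComponents_le hF fun x _ _ _ hyx => connectedComponentIn_mono x hSS' hyx

lemma exists_constOnComponents_le_iUnion [LocallyConnectedSpace X] {ι : Type*} [Nonempty ι]
    {U : ι → Set X} (hdir : Directed (· ⊆ ·) U) (hU : ∀ i, IsOpen (U i)) {F : Finset X}
    (hF : ↑F ⊆ ⋃ i, U i) :
    ∃ i, constOnComponents F (U i) ≤ constOnComponents F (⋃ i, U i) := by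
  have hpair : ∀ xy : F × F, ∃ i, (xy.2 : X) ∈ connectedComponentIn (⋃ i, U i) xy.1 →
      (xy.2 : X) ∈ connectedComponentIn (U i) xy.1 := fun xy => by
    by_contra! h
    obtain ⟨i, hi⟩ := exists_mem_connectedComponentIn_of_mem_iUnion hdir hU
      (h (Classical.arbitrary ι)).1
    exact (h i).2 hi
  choose i hi using hpair
  obtain ⟨k, hk⟩ := hdir.finite_le i
  exact ⟨k, constOnComponents_le hF fun x hx y hy hyx =>
    connectedComponentIn_mono x (hk (⟨x, hx⟩, ⟨y, hy⟩)) (hi (⟨x, hx⟩, ⟨y, hy⟩) hyx)⟩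

lemma exists_constOnComponents_iInter_le [T2Space X] {ι : Type*} [Nonempty ι] {K : ι → Set X}
    (hdir : Directed (· ⊇ ·) K) (hK : ∀ i, IsCompact (K i)) {F : Finset X}
    (hF : ∀ i, ↑F ⊆ K i) :
    ∃ i, constOnComponents F (⋂ i, K i) ≤ constOnComponents F (K i) := by
  have hpair : ∀ xy : F × F, ∃ i, (xy.2 : X) ∈ connectedComponentIn (K i) xy.1 →
      (xy.2 : X) ∈ connectedComponentIn (⋂ i, K i) xy.1 := fun xy => by
    by_contra! h
    obtain ⟨i, hi⟩ := exists_notMem_connectedComponentIn_of_iInter hdir hK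
      (fun i => hF i xy.1.2) (h (Classical.arbitrary ι)).2
    exact hi (h i).1
  choose i hi using hpair
  obtain ⟨k, hk⟩ := hdir.finite_le i
  exact ⟨k, constOnComponents_le (hF k) fun x hx y hy hyx =>
    hi (⟨x, hx⟩, ⟨y, hy⟩) (connectedComponentIn_mono x (hk (⟨x, hx⟩, ⟨y, hy⟩)) hyx)⟩

lemma finrank_le_finrank_inf_ker_add {R V W : Type*} [DivisionRing R] [AddCommGroup V] [Module R V]
    [FiniteDimensional R V] [AddCommGroup W] [Module R W] [FiniteDimensional R W]
    (M : Submodule R V) (φ : V →ₗ[R] W) :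
    finrank R M ≤ finrank R ↥(M ⊓ LinearMap.ker φ) + finrank R W := by
  have hker : finrank R (LinearMap.ker (φ.domRestrict M)) = finrank R ↥(M ⊓ LinearMap.ker φ) := by
    rw [LinearMap.ker_domRestrict, ← Submodule.map_comap_subtype, Submodule.finrank_map_subtype_eq]
  have hrange := (LinearMap.range (φ.domRestrict M)).finrank_le
  have := (φ.domRestrict M).finrank_range_add_finrank_ker
  lia

lemma mem_constOnComponents_of_eventuallyConst [LocallyConnectedSpace X] {F : Finset X}
    {U K : Set X} (hU : IsOpen U) (hFU : ↑F ⊆ U) (hUK : U ⊆ K) (hKU : K ⊆ closure U)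
    (hmeet : ∀ z ∈ U, ∃ x ∈ F, z ∈ connectedComponentIn U x) {g : F → ℝ}
    (hg : g ∈ constOnComponents F U)
    (hconst : ∀ p ∈ K \ U, ∃ a, ∀ᶠ z in 𝓝[U] p, ∃ x : F, z ∈ connectedComponentIn U x ∧ g x = a) :
    g ∈ constOnComponents F K := by
  let G : X → ℝ := fun z =>
    Function.extend (fun x : F => connectedComponentIn U (x : X)) g 0 (connectedComponentIn U z)
  have hG : ∀ (x : F) {z}, z ∈ connectedComponentIn U x → G z = g x := fun x z hz => by
    simp only [G, ← connectedComponentIn_eq hz]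
    exact Function.FactorsThrough.extend_apply hg 0 x
  have hGconst : ∀ p ∈ K, ∃ a, ∀ᶠ z in 𝓝[U] p, G z = a := fun p hpK => by
    rcases em (p ∈ U) with hpU | hpU
    · obtain ⟨x, hx, hpx⟩ := hmeet p hpU
      refine ⟨g ⟨x, hx⟩, nhdsWithin_le_nhds ?_⟩
      filter_upwards [hU.connectedComponentIn.mem_nhds hpx] with z hz using hG ⟨x, hx⟩ hz
    · obtain ⟨a, ha⟩ := hconst p ⟨hpK, hpU⟩
      refine ⟨a, ha.mono ?_⟩
      rintro z ⟨x, hzx, rfl⟩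
      exact hG x hzx
  intro x y hxy
  have hcomp : connectedComponentIn K (x : X) ⊆ K := connectedComponentIn_subset _ _
  have hyx : (y : X) ∈ connectedComponentIn K x := by
    rw [show connectedComponentIn K (x : X) = connectedComponentIn K y from hxy]
    exact mem_connectedComponentIn (hUK (hFU y.2))
  rw [← hG x (mem_connectedComponentIn (hFU x.2)), ← hG y (mem_connectedComponentIn (hFU y.2))]
  exact eq_of_eventuallyConst_nhdsWithin isPreconnected_connectedComponentIn (hcomp.trans hKU)
    (fun p hp => hGconst p (hcomp hp)) ⟨mem_connectedComponentIn (hUK (hFU x.2)), hFU x.2⟩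
    ⟨hyx, hFU y.2⟩

lemma finrank_constOnComponents_le_add_sum [LocallyConnectedSpace X] {F T : Finset X}
    {U K : Set X} (hU : IsOpen U) (hFU : ↑F ⊆ U) (hUK : U ⊆ K) (hKU : K ⊆ closure U)
    (hmeet : ∀ z ∈ U, ∃ x ∈ F, z ∈ connectedComponentIn U x) (hT : ↑T ⊆ K \ U) {m : X → ℕ}
    (hm : ∀ p ∈ K \ U, p ∉ T → m p = 0)
    (hcover : ∀ p ∈ K \ U, ∃ x : Fin (m p + 1) → F,
      ∀ᶠ z in 𝓝[U] p, ∃ j, z ∈ connectedComponentIn U (x j)) :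
    finrank ℝ (constOnComponents F U) ≤ finrank ℝ (constOnComponents F K) + ∑ p ∈ T, m p := by
  choose x hx using hcover
  let φ : (F → ℝ) →ₗ[ℝ] ((Σ p : T, Fin (m p)) → ℝ) :=
    LinearMap.funLeft ℝ ℝ (fun i => x i.1 (hT i.1.2) i.2.succ) -
      LinearMap.funLeft ℝ ℝ (fun i => x i.1 (hT i.1.2) 0)
  have hφ : finrank ℝ ((Σ p : T, Fin (m p)) → ℝ) = ∑ p ∈ T, m p := by
    rw [finrank_fintype_fun_eq_card, Fintype.card_sigma, ← Finset.sum_coe_sort T m]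
    exact Finset.sum_congr rfl fun _ _ => Fintype.card_fin _
  have hle : constOnComponents F U ⊓ LinearMap.ker φ ≤ constOnComponents F K := by
    rintro g ⟨hg, hgφ⟩
    refine mem_constOnComponents_of_eventuallyConst hU hFU hUK hKU hmeet hg fun p hp => ?_
    have hgx : ∀ j, g (x p hp j) = g (x p hp 0) := fun j => by
      cases j using Fin.cases with
      | zero => rfl
      | succ i =>
        have hpT : p ∈ T := by
          by_contra hpT
          exact (hm p hp hpT ▸ i).elim0
        exact sub_eq_zero.1 (congrFun hgφ ⟨⟨p, hpT⟩, i⟩)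
    exact ⟨g (x p hp 0), (hx p hp).mono fun z ⟨j, hj⟩ => ⟨x p hp j, hj, hgx j⟩⟩
  calc finrank ℝ (constOnComponents F U)
      ≤ finrank ℝ ↥(constOnComponents F U ⊓ LinearMap.ker φ) + ∑ p ∈ T, m p :=
        hφ ▸ finrank_le_finrank_inf_ker_add _ φ
    _ ≤ finrank ℝ (constOnComponents F K) + ∑ p ∈ T, m p := by
        gcongr
        exact Submodule.finrank_mono hle

end ConstOnComponents

section LocalStructure

lemma exists_pow_rightInverse_analyticAt {n : ℕ} (hn : n ≠ 0) {b : ℂ} (hb : b ≠ 0) :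
    ∃ ρ : ℂ → ℂ, (∀ t, ρ t ^ n = t) ∧ ∀ t, 0 < (t * b).re → AnalyticAt ℂ ρ t := by
  obtain ⟨a, ha⟩ := IsAlgClosed.exists_pow_nat_eq b⁻¹ hn.bot_lt
  refine ⟨fun t => a * (t * b) ^ (n⁻¹ : ℂ), fun t => ?_, fun t ht => ?_⟩
  · rw [mul_pow, ha, Complex.cpow_nat_inv_pow _ hn, mul_comm t b, inv_mul_cancel_left₀ hb]
  · exact analyticAt_const.mul
      ((analyticAt_id.mul analyticAt_const).cpow analyticAt_const (Or.inl ht))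

lemma exists_openPartialHomeomorph_pow_eq {f : ℂ → ℂ} {p : ℂ} {n : ℕ} (hn : n ≠ 0)
    (hf : AnalyticAt ℂ f p) (hfn : analyticOrderAt f p = n) :
    ∃ e : OpenPartialHomeomorph ℂ ℂ, p ∈ e.source ∧ e p = 0 ∧ ∀ z ∈ e.source, f z = e z ^ n := by
  obtain ⟨g, hg, hg0, hfg⟩ := hf.analyticOrderAt_eq_natCast.1 hfn
  obtain ⟨ρ, hρ, hρa⟩ := exists_pow_rightInverse_analyticAt hn (inv_ne_zero hg0)
  have hρg : AnalyticAt ℂ (fun z => ρ (g z)) p :=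
    (hρa (g p) (by simp [mul_inv_cancel₀ hg0])).comp hg
  have hρ0 : ρ (g p) ≠ 0 := fun h => hg0 (by rw [← hρ (g p), h, zero_pow hn])
  have hφ : HasStrictDerivAt (fun z => (z - p) * ρ (g z)) (ρ (g p)) p := by
    simpa using HasStrictDerivAt.fun_mul ((hasStrictDerivAt_id p).sub_const p) hρg.hasStrictDerivAt
  have hφ' := hφ.hasStrictFDerivAt_equiv hρ0
  obtain ⟨W, hW, hWo, hpW⟩ := _root_.eventually_nhds_iff.1 hfg
  refine ⟨(hφ'.toOpenPartialHomeomorph _).restrOpen W hWo,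
    ⟨hφ'.mem_toOpenPartialHomeomorph_source, hpW⟩, by simp, fun z hz => ?_⟩
  rw [hW z hz.2, OpenPartialHomeomorph.coe_restrOpen, hφ'.toOpenPartialHomeomorph_coe, mul_pow, hρ,
    smul_eq_mul]

lemma exists_isPreconnected_iUnion_eq_preimage_pow {n : ℕ} (hn : n ≠ 0) {b : ℂ} (hb : b ≠ 0)
    {L : Set ℂ} (hL : IsPreconnected L) (hLb : ∀ t ∈ L, 0 < (t * b).re) :
    ∃ s : Fin n → Set ℂ, (∀ j, IsPreconnected (s j)) ∧ {w | w ^ n ∈ L} = ⋃ j, s j := by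
  have : NeZero n := ⟨hn⟩
  obtain ⟨ρ, hρ, hρa⟩ := exists_pow_rightInverse_analyticAt hn hb
  have hζ := Complex.isPrimitiveRoot_exp n hn
  set ζ := Complex.exp (2 * Real.pi * Complex.I / n)
  have hρL : ContinuousOn ρ L := fun t ht => (hρa t (hLb t ht)).continuousAt.continuousWithinAt
  refine ⟨fun j => (fun t => ζ ^ (j : ℕ) * ρ t) '' L,
    fun j => hL.image _ (continuousOn_const.mul hρL), Set.ext fun w => ?_⟩
  simp only [Set.mem_ofPred_eq, Set.mem_iUnion, Set.mem_image]
  constructor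
  · intro hw
    have hρ0 : ρ (w ^ n) ≠ 0 := fun h => by
      have hw0 : w ^ n = 0 := by rw [← hρ (w ^ n), h, zero_pow hn]
      simpa [hw0] using hLb _ hw
    have hroot : (w / ρ (w ^ n)) ^ n = 1 := by
      rw [div_pow, hρ, div_self (hρ (w ^ n) ▸ pow_ne_zero n hρ0)]
    obtain ⟨j, hj, hjw⟩ := hζ.eq_pow_of_pow_eq_one hroot
    exact ⟨⟨j, hj⟩, w ^ n, hw, by rw [hjw, div_mul_cancel₀ _ hρ0]⟩
  · rintro ⟨j, t, ht, rfl⟩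
    rwa [mul_pow, hρ, pow_right_comm, hζ.pow_eq_one, one_pow, one_mul]

/- Near `p` the map `f` is an `n`-th power in a suitable coordinate, and a convex set cut out by a
half-plane with `f p` on its boundary has `n` preconnected `n`-th roots. -/
lemma exists_isPreconnected_cover_preimage_convex {f : ℂ → ℂ} {p : ℂ} {n : ℕ} (hn : n ≠ 0)
    (hf : AnalyticAt ℂ f p) (hfn : analyticOrderAt (fun z => f z - f p) p = n) {V : Set ℂ}
    (hV : Convex ℝ V) {b : ℂ} (hb : b ≠ 0) (hVb : ∀ w ∈ V, 0 < ((w - f p) * b).re) :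
    ∃ s : Fin n → Set ℂ, (∀ j, IsPreconnected (s j) ∧ s j ⊆ f ⁻¹' V) ∧
      ∀ᶠ z in 𝓝[f ⁻¹' V] p, ∃ j, z ∈ s j := by
  obtain ⟨e, hpe, hep, he⟩ :=
    exists_openPartialHomeomorph_pow_eq hn (hf.fun_sub analyticAt_const) hfn
  obtain ⟨ε, hε, hball⟩ := Metric.isOpen_iff.1 e.open_target 0 (hep ▸ e.map_source hpe)
  have hL : IsPreconnected (ball (0 : ℂ) (ε ^ n) ∩ (fun t => f p + t) ⁻¹' V) :=
    ((convex_ball 0 _).inter (hV.translate_preimage_right _)).isPreconnected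
  obtain ⟨s, hs, hsL⟩ := exists_isPreconnected_iUnion_eq_preimage_pow hn hb hL
    fun t ht => by simpa using hVb _ ht.2
  have hsL' : ∀ j, ∀ w ∈ s j, w ∈ e.target ∧ f p + w ^ n ∈ V := fun j w hw => by
    have hwL := hsL.superset (Set.mem_iUnion_of_mem j hw)
    refine ⟨hball (mem_ball_zero_iff.2 (lt_of_pow_lt_pow_left₀ n hε.le ?_)), hwL.2⟩
    rw [← norm_pow]
    exact mem_ball_zero_iff.1 hwL.1
  refine ⟨fun j => e.symm '' s j, fun j => ⟨(hs j).image _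
    (e.continuousOn_symm.mono fun w hw => (hsL' j w hw).1), ?_⟩, ?_⟩
  · rintro _ ⟨w, hw, rfl⟩
    obtain ⟨hwt, hwV⟩ := hsL' j w hw
    have hew := he _ (e.map_target hwt)
    rw [e.right_inv hwt] at hew
    rwa [Set.mem_preimage, ← sub_add_cancel (f (e.symm w)) (f p), hew, add_comm]
  · have hnear : ∀ᶠ z in 𝓝 p, z ∈ e.source ∧ e z ∈ ball 0 ε :=
      (e.open_source.eventually_mem hpe).and
        ((e.continuousAt hpe).eventually_mem (by simpa [hep] using ball_mem_nhds 0 hε))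
    filter_upwards [nhdsWithin_le_nhds hnear, self_mem_nhdsWithin] with z ⟨hz, hez⟩ hzV
    have hezL : e z ∈ ⋃ j, s j := by
      refine hsL.subset ⟨?_, ?_⟩
      · simpa using pow_lt_pow_left₀ (mem_ball_zero_iff.1 hez) (norm_nonneg _) hn
      · simpa [← he z hz] using hzV
    obtain ⟨j, hj⟩ := Set.mem_iUnion.1 hezL
    exact ⟨j, e z, hj, e.left_inv hz⟩

lemma analyticOrderAt_eval {f : ℂ[X]} (hf : f ≠ 0) (p : ℂ) :
    analyticOrderAt (fun z => f.eval z) p = f.rootMultiplicity p := by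
  obtain ⟨g, hfg, hg⟩ := f.exists_eq_pow_rootMultiplicity_mul_and_not_dvd hf p
  have hana : AnalyticOnNhd ℂ (fun z => f.eval z) Set.univ := .eval_polynomial f
  refine (hana p (Set.mem_univ p)).analyticOrderAt_eq_natCast.2
    ⟨fun z => g.eval z, AnalyticOnNhd.eval_polynomial g p (Set.mem_univ p),
      fun h => hg (dvd_iff_isRoot.2 h), .of_forall fun z => ?_⟩
  conv_lhs => rw [hfg]
  simp

lemma analyticOrderAt_eval_sub {f : ℂ[X]} (hf : f.natDegree ≠ 0) (p : ℂ) :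
    analyticOrderAt (fun z => f.eval z - f.eval p) p =
      (f.derivative.rootMultiplicity p + 1 : ℕ) := by
  have hroot : (f - C (f.eval p)).IsRoot p := by simp
  have hne : f - C (f.eval p) ≠ 0 := fun h => hf (by rw [sub_eq_zero.1 h, natDegree_C])
  have hmult := derivative_rootMultiplicity_of_root hroot
  rw [derivative_sub, derivative_C, sub_zero] at hmult
  rw [hmult, Nat.sub_add_cancel ((rootMultiplicity_pos hne).2 hroot), ← analyticOrderAt_eval hne]
  simp only [eval_sub, eval_C]

end LocalStructure

section Lemniscates

/-- The finite set of solutions of `f z = c`, for a nonconstant polynomial `f`; it is the sample on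
which the components of the preimages of neighbourhoods of `c` are counted. -/
noncomputable def fiber (f : ℂ[X]) (c : ℂ) : Finset ℂ :=
  (f - C c).roots.toFinset

open Classical in
/-- The number of critical points of `f` in `S`, counted with multiplicity. -/
noncomputable def criticalCount (f : ℂ[X]) (S : Set ℂ) : ℕ :=
  ∑ p ∈ f.derivative.roots.toFinset with p ∈ S, f.derivative.rootMultiplicity p

variable {f : ℂ[X]} {c : ℂ}

lemma criticalCount_mono {S S' : Set ℂ} (h : S ⊆ S') : criticalCount f S ≤ criticalCount f S' := by
  classical
  exact Finset.sum_le_sum_of_subset (Finset.monotone_filter_right _ fun _ _ hp => h hp)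

lemma criticalCount_union {S S' : Set ℂ} (h : Disjoint S S') :
    criticalCount f (S ∪ S') = criticalCount f S + criticalCount f S' := by
  classical
  simp only [criticalCount, Set.mem_union, Finset.filter_or]
  exact Finset.sum_union (Finset.disjoint_filter.2 fun _ _ hp => Set.disjoint_left.1 h hp)

lemma criticalCount_le (f : ℂ[X]) (S : Set ℂ) : criticalCount f S ≤ f.natDegree - 1 := by
  classical
  calc criticalCount f S
      ≤ ∑ p ∈ f.derivative.roots.toFinset, f.derivative.rootMultiplicity p :=
        Finset.sum_le_sum_of_subset (Finset.filter_subset _ _)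
    _ = f.derivative.natDegree := by
        simp only [← count_roots, Multiset.toFinset_sum_count_eq,
          IsAlgClosed.card_roots_eq_natDegree]
    _ ≤ f.natDegree - 1 := f.natDegree_derivative_le

lemma criticalCount_neg (f : ℂ[X]) (S : Set ℂ) : criticalCount (-f) S = criticalCount f S := by
  simp only [criticalCount, ← count_roots, derivative_neg, roots_neg]

lemma mem_fiber (hf : f.natDegree ≠ 0) {z : ℂ} : z ∈ fiber f c ↔ f.eval z = c :=
  Multiset.mem_toFinset.trans
    (mem_roots_sub_C (natDegree_pos_iff_degree_pos.1 (Nat.pos_of_ne_zero hf)))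

lemma fiber_subset_preimage (hf : f.natDegree ≠ 0) {S : Set ℂ} (hc : c ∈ S) :
    ↑(fiber f c) ⊆ f.eval ⁻¹' S :=
  fun _ hz => Set.mem_preimage.2 ((mem_fiber hf).1 hz ▸ hc)

lemma exists_mem_fiber_mem_connectedComponentIn (hf : f.natDegree ≠ 0) {V : Set ℂ} (hV : IsOpen V)
    (hVc : IsPreconnected V) (hc : c ∈ V) {z : ℂ} (hz : z ∈ f.eval ⁻¹' V) :
    ∃ x ∈ fiber f c, z ∈ connectedComponentIn (f.eval ⁻¹' V) x := by
  obtain ⟨x, hx, hxc⟩ := (image_connectedComponentIn_preimage f.continuous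
    (f.isOpenQuotientMap_eval hf).isOpenMap f.isClosedMap_eval hV hVc hz).superset hc
  refine ⟨x, (mem_fiber hf).2 hxc, ?_⟩
  rw [← connectedComponentIn_eq hx]
  exact mem_connectedComponentIn hz

lemma nodalComponents_preimage_eq_image_fiber (hf : f.natDegree ≠ 0) {V : Set ℂ} (hV : IsOpen V)
    (hVc : IsPreconnected V) (hc : c ∈ V) :
    nodalComponents (f.eval ⁻¹' V) = connectedComponentIn (f.eval ⁻¹' V) '' fiber f c :=
  nodalComponents_eq_image_of_meets (fiber_subset_preimage hf hc)
    fun _ => exists_mem_fiber_mem_connectedComponentIn hf hV hVc hc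

lemma natDegree_le_card_fiber_add_criticalCount (hf : f.natDegree ≠ 0) (c : ℂ) :
    f.natDegree ≤ (fiber f c).card + criticalCount f (f.eval ⁻¹' {c}) := by
  classical
  have hmult : ∀ p ∈ fiber f c,
      (f - C c).rootMultiplicity p = 1 + f.derivative.rootMultiplicity p := fun p hp => by
    have hroot : p ∈ (f - C c).roots := Multiset.mem_toFinset.1 hp
    have hpos := (rootMultiplicity_pos (mem_roots'.1 hroot).1).2 (mem_roots'.1 hroot).2
    have hder := derivative_rootMultiplicity_of_root (mem_roots'.1 hroot).2
    rw [derivative_sub, derivative_C, sub_zero] at hder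
    lia
  have hsub : {p ∈ fiber f c | f.derivative.rootMultiplicity p ≠ 0} ⊆
      {p ∈ f.derivative.roots.toFinset | p ∈ f.eval ⁻¹' {c}} := fun p hp => by
    rw [Finset.mem_filter, ← count_roots, Multiset.count_ne_zero] at hp
    exact Finset.mem_filter.2 ⟨Multiset.mem_toFinset.2 hp.2, (mem_fiber hf).1 hp.1⟩
  calc f.natDegree = ∑ p ∈ fiber f c, (f - C c).rootMultiplicity p := by
        simp only [fiber, ← count_roots, Multiset.toFinset_sum_count_eq,
          IsAlgClosed.card_roots_eq_natDegree, natDegree_sub_C]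
    _ = (fiber f c).card + ∑ p ∈ fiber f c, f.derivative.rootMultiplicity p := by
        rw [Finset.sum_congr rfl hmult, Finset.sum_add_distrib, Finset.card_eq_sum_ones]
    _ ≤ (fiber f c).card + criticalCount f (f.eval ⁻¹' {c}) := by
        rw [← Finset.sum_filter_ne_zero]
        gcongr
        exact Finset.sum_le_sum_of_subset hsub

lemma finrank_constOnComponents_self {X : Type*} [MetricSpace X] (F : Finset X) :
    finrank ℝ (constOnComponents F (F : Set X)) = F.card := by
  rw [finrank_constOnComponents, Set.InjOn.ncard_image, Set.ncard_coe_finset]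
  intro x hx y hy hxy
  have hyx : y ∈ connectedComponentIn (F : Set X) x := hxy ▸ mem_connectedComponentIn hy
  exact F.countable_toSet.isTotallyDisconnected _ (connectedComponentIn_subset _ _)
    isPreconnected_connectedComponentIn (mem_connectedComponentIn hx) hyx

lemma re_sub_mul_conj_pos {w p : ℂ} (h : dist w c < dist p c) :
    0 < ((w - p) * starRingEnd ℂ (c - p)).re := by
  have hcs : |((w - c) * starRingEnd ℂ (c - p)).re| ≤ dist w c * dist p c := by
    rw [dist_comm p c, Complex.dist_eq, Complex.dist_eq, ← Complex.norm_conj (c - p), ← norm_mul]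
    exact Complex.abs_re_le_norm _
  have hsq : ((c - p) * starRingEnd ℂ (c - p)).re = dist p c ^ 2 := by
    rw [Complex.mul_conj, Complex.ofReal_re, Complex.normSq_eq_norm_sq, ← Complex.dist_eq,
      dist_comm]
  have hsplit : (w - p) * starRingEnd ℂ (c - p) =
      (w - c) * starRingEnd ℂ (c - p) + (c - p) * starRingEnd ℂ (c - p) := by ring
  rw [hsplit, Complex.add_re, hsq]
  nlinarith [neg_le_of_abs_le hcs, dist_nonneg (x := w) (y := c)]

lemma exists_fiber_cover_nhdsWithin_preimage_ball (hf : f.natDegree ≠ 0) {p : ℂ}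
    (hp : f.eval p ≠ c) :
    ∃ x : Fin (f.derivative.rootMultiplicity p + 1) → fiber f c,
      ∀ᶠ z in 𝓝[f.eval ⁻¹' ball c (dist (f.eval p) c)] p,
        ∃ j, z ∈ connectedComponentIn (f.eval ⁻¹' ball c (dist (f.eval p) c)) (x j) := by
  set V := ball c (dist (f.eval p) c)
  have hcV : c ∈ V := mem_ball_self (dist_pos.2 hp)
  obtain ⟨s, hs, hsnear⟩ := exists_isPreconnected_cover_preimage_convex (Nat.succ_ne_zero _)
    (AnalyticOnNhd.eval_polynomial f p (Set.mem_univ p))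
    (analyticOrderAt_eval_sub hf p)
    (convex_ball c (dist (f.eval p) c)) ((_root_.map_ne_zero _).2 (sub_ne_zero.2 hp.symm))
    fun w => re_sub_mul_conj_pos
  have hsx : ∀ j, ∃ x : fiber f c, s j ⊆ connectedComponentIn (f.eval ⁻¹' V) x := fun j => by
    rcases (s j).eq_empty_or_nonempty with hj | ⟨z, hz⟩
    · obtain ⟨x, hx⟩ := (f.isOpenQuotientMap_eval hf).surjective c
      exact ⟨⟨x, (mem_fiber hf).2 hx⟩, hj ▸ Set.empty_subset _⟩
    · obtain ⟨x, hx, hzx⟩ := exists_mem_fiber_mem_connectedComponentIn hf isOpen_ball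
        (convex_ball _ _).isPreconnected hcV ((hs j).2 hz)
      refine ⟨⟨x, hx⟩, ?_⟩
      rw [connectedComponentIn_eq hzx]
      exact (hs j).1.subset_connectedComponentIn hz (hs j).2
  choose x hx using hsx
  exact ⟨x, hsnear.mono fun z ⟨j, hj⟩ => ⟨j, hx j hj⟩⟩

lemma finrank_constOnComponents_preimage_ball_le (hf : f.natDegree ≠ 0) {r : ℝ} (hr : 0 < r) :
    finrank ℝ (constOnComponents (fiber f c) (f.eval ⁻¹' ball c r)) ≤
      finrank ℝ (constOnComponents (fiber f c) (f.eval ⁻¹' closedBall c r)) +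
        criticalCount f (f.eval ⁻¹' sphere c r) := by
  classical
  have hcr : c ∈ ball c r := mem_ball_self hr
  have hdiff : f.eval ⁻¹' closedBall c r \ f.eval ⁻¹' ball c r = f.eval ⁻¹' sphere c r := by
    rw [← Set.preimage_sdiff, closedBall_sdiff_ball]
  have hclosure : f.eval ⁻¹' closedBall c r ⊆ closure (f.eval ⁻¹' ball c r) := by
    rw [← closure_ball c hr.ne']
    exact (f.isOpenQuotientMap_eval hf).isOpenMap.preimage_closure_subset_closure_preimage
  refine finrank_constOnComponents_le_add_sum (isOpen_ball.preimage f.continuous)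
    (fiber_subset_preimage hf hcr) (Set.preimage_mono ball_subset_closedBall) hclosure
    (fun _ => exists_mem_fiber_mem_connectedComponentIn hf isOpen_ball
      (convex_ball c r).isPreconnected hcr) ?_ ?_ ?_ <;> rw [hdiff]
  · exact fun p hp => (Finset.mem_filter.1 hp).2
  · refine fun p hp hpT => rootMultiplicity_eq_zero fun hroot => hpT ?_
    exact Finset.mem_filter.2 ⟨Multiset.mem_toFinset.2 (mem_roots'.2
      ⟨mt derivative_eq_zero.1 hf, hroot⟩), hp⟩
  · intro p hp
    rw [← mem_sphere.1 hp]
    exact exists_fiber_cover_nhdsWithin_preimage_ball hf (ne_of_mem_sphere hp hr.ne')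

end Lemniscates

section HalfPlanes

variable {f : ℂ[X]} {c : ℂ}

lemma forall_ge_of_forall_Ico_of_exists_Ioo {α : Type*} [ConditionallyCompleteLinearOrder α]
    {a : α} {P : α → Prop} (hleft : ∀ r ≥ a, (∀ t ∈ Set.Ico a r, P t) → P r)
    (hright : ∀ r ≥ a, P r → ∃ τ > r, ∀ t ∈ Set.Ioo r τ, P t) {r : α} (hr : a ≤ r) : P r := by
  by_contra hPr
  set B := {t | a ≤ t ∧ ¬ P t}
  have hBne : B.Nonempty := ⟨r, hr, hPr⟩
  have hBbdd : BddBelow B := ⟨a, fun t ht => ht.1⟩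
  have hρ : a ≤ sInf B := le_csInf hBne fun t ht => ht.1
  have hPρ : P (sInf B) := hleft _ hρ fun t ht =>
    by_contra fun hPt => ht.2.not_ge (csInf_le hBbdd ⟨ht.1, hPt⟩)
  obtain ⟨τ, hτ, hPτ⟩ := hright _ hρ hPρ
  obtain ⟨t, ht, htτ⟩ := exists_lt_of_csInf_lt hBne hτ
  refine ht.2 (hPτ t ⟨(csInf_le hBbdd ht).lt_of_ne ?_, htτ⟩)
  exact fun h => ht.2 (h ▸ hPρ)

lemma exists_constOnComponents_preimage_ball_le (hf : f.natDegree ≠ 0) {r : ℝ} (hr : 0 < r) :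
    ∃ σ ∈ Set.Ico 0 r, constOnComponents (fiber f c) (f.eval ⁻¹' closedBall c σ) ≤
      constOnComponents (fiber f c) (f.eval ⁻¹' ball c r) := by
  have hunion : ⋃ σ : Set.Ioo 0 r, f.eval ⁻¹' ball c σ = f.eval ⁻¹' ball c r := by
    ext z
    simp only [Set.mem_iUnion, Set.mem_preimage, mem_ball, Subtype.exists, Set.mem_Ioo, exists_prop]
    refine ⟨fun ⟨σ, hσ, hz⟩ => hz.trans hσ.2, fun hz => ?_⟩
    obtain ⟨σ, hzσ, hσr⟩ := exists_between hz
    exact ⟨σ, ⟨dist_nonneg.trans_lt hzσ, hσr⟩, hzσ⟩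
  have : Nonempty (Set.Ioo 0 r) := (Set.nonempty_Ioo.2 hr).to_subtype
  have hmono : Monotone fun σ : Set.Ioo 0 r => f.eval ⁻¹' ball c (σ : ℝ) :=
    fun _ _ h => Set.preimage_mono (ball_subset_ball h)
  obtain ⟨σ, hσ⟩ := exists_constOnComponents_le_iUnion (F := fiber f c) hmono.directed_le
    (fun _ => isOpen_ball.preimage f.continuous)
    (hunion ▸ fiber_subset_preimage hf (mem_ball_self hr))
  rw [hunion] at hσ
  refine ⟨σ, ⟨σ.2.1.le, σ.2.2⟩, le_trans ?_ hσ⟩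
  exact constOnComponents_anti (fiber_subset_preimage hf (mem_ball_self σ.2.1))
    (Set.preimage_mono ball_subset_closedBall)

lemma exists_constOnComponents_preimage_closedBall_le (hf : f.natDegree ≠ 0) {r : ℝ} (hr : 0 ≤ r) :
    ∃ τ > r, constOnComponents (fiber f c) (f.eval ⁻¹' closedBall c r) ≤
      constOnComponents (fiber f c) (f.eval ⁻¹' closedBall c τ) := by
  have hinter : ⋂ τ : Set.Ioi r, f.eval ⁻¹' closedBall c τ = f.eval ⁻¹' closedBall c r := by
    ext z
    simp only [Set.mem_iInter, Set.mem_preimage, mem_closedBall, Subtype.forall, Set.mem_Ioi]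
    exact ⟨le_of_forall_gt_imp_ge_of_dense, fun h τ hτ => h.trans hτ.le⟩
  have hmono : Monotone fun τ : Set.Ioi r => f.eval ⁻¹' closedBall c (τ : ℝ) :=
    fun _ _ h => Set.preimage_mono (closedBall_subset_closedBall h)
  have hproper := f.isProperMap_eval (natDegree_pos_iff_degree_pos.1 (Nat.pos_of_ne_zero hf))
  obtain ⟨τ, hτ⟩ := exists_constOnComponents_iInter_le (F := fiber f c) hmono.directed_ge
    (fun _ => hproper.isCompact_preimage (isCompact_closedBall c _))
    (fun τ => fiber_subset_preimage hf (mem_closedBall_self (hr.trans τ.2.le)))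
  exact ⟨τ, τ.2, hinter ▸ hτ⟩

/- As the disc grows, components of its preimage can merge only when the boundary circle crosses a
critical value, and then by at most the multiplicity of the critical points involved. -/
lemma natDegree_le_finrank_add_criticalCount (hf : f.natDegree ≠ 0) {r : ℝ} (hr : 0 ≤ r) :
    f.natDegree ≤ finrank ℝ (constOnComponents (fiber f c) (f.eval ⁻¹' closedBall c r)) +
      criticalCount f (f.eval ⁻¹' closedBall c r) := by
  refine forall_ge_of_forall_Ico_of_exists_Ioo (P := fun r => f.natDegree ≤
    finrank ℝ (constOnComponents (fiber f c) (f.eval ⁻¹' closedBall c r)) +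
      criticalCount f (f.eval ⁻¹' closedBall c r)) ?_ ?_ hr
  · intro r hr hlt
    rcases hr.eq_or_lt' with rfl | hr
    · have hfiber : (f.eval ⁻¹' {c} : Set ℂ) = fiber f c := Set.ext fun z => (mem_fiber hf).symm
      rw [closedBall_zero, hfiber, finrank_constOnComponents_self, ← hfiber]
      exact natDegree_le_card_fiber_add_criticalCount hf c
    · obtain ⟨σ, hσ, hle⟩ := exists_constOnComponents_preimage_ball_le (c := c) hf hr
      have hcrit : criticalCount f (f.eval ⁻¹' closedBall c σ) +
            criticalCount f (f.eval ⁻¹' sphere c r) ≤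
          criticalCount f (f.eval ⁻¹' closedBall c r) := by
        rw [← criticalCount_union, ← Set.preimage_union]
        · exact criticalCount_mono (Set.preimage_mono (Set.union_subset
            (closedBall_subset_closedBall hσ.2.le) sphere_subset_closedBall))
        · refine Disjoint.preimage _ (Set.disjoint_left.2 fun w hw hwr => ?_)
          exact hσ.2.not_ge (hwr ▸ hw)
      have hjump := finrank_constOnComponents_preimage_ball_le (c := c) hf hr
      have := hlt σ hσ
      have := Submodule.finrank_mono hle
      lia
  · intro r hr hPr
    obtain ⟨τ, hτ, hle⟩ := exists_constOnComponents_preimage_closedBall_le (c := c) hf hr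
    refine ⟨τ, hτ, fun t ht => hPr.trans (add_le_add (Submodule.finrank_mono ?_)
      (criticalCount_mono (Set.preimage_mono (closedBall_subset_closedBall ht.1.le))))⟩
    exact hle.trans (constOnComponents_anti
      (fiber_subset_preimage hf (mem_closedBall_self (hr.trans ht.1.le)))
      (Set.preimage_mono (closedBall_subset_closedBall ht.2.le)))

lemma natDegree_le_ncard_nodalComponents_preimage_ball (hf : f.natDegree ≠ 0) (c : ℂ) {r : ℝ}
    (hr : 0 < r) :
    f.natDegree ≤ (nodalComponents (f.eval ⁻¹' ball c r)).ncard +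
      criticalCount f (f.eval ⁻¹' ball c r) := by
  obtain ⟨σ, hσ, hle⟩ := exists_constOnComponents_preimage_ball_le (c := c) hf hr
  rw [nodalComponents_preimage_eq_image_fiber hf isOpen_ball (convex_ball c r).isPreconnected
    (mem_ball_self hr), ← finrank_constOnComponents]
  exact (natDegree_le_finrank_add_criticalCount hf hσ.1).trans (add_le_add
    (Submodule.finrank_mono hle)
    (criticalCount_mono (Set.preimage_mono (closedBall_subset_ball hσ.2))))

lemma iUnion_ball_eq_setOf_re_pos : ⋃ R : Set.Ici (1 : ℝ), ball (R : ℂ) R = {w : ℂ | 0 < w.re} := by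
  ext w
  simp only [Set.mem_iUnion, Set.mem_ofPred_eq, mem_ball, Subtype.exists, exists_prop]
  constructor
  · rintro ⟨R, -, hwR⟩
    have hre := (Complex.abs_re_le_norm (w - R)).trans_lt (Complex.dist_eq w R ▸ hwR)
    rw [Complex.sub_re, Complex.ofReal_re] at hre
    linarith [(abs_lt.1 hre).1]
  · intro hw
    set R := max 1 (Complex.normSq w / w.re)
    have hR : 1 ≤ R := le_max_left _ _
    have hnorm : Complex.normSq w ≤ R * w.re := (div_le_iff₀ hw).1 (le_max_right _ _)
    refine ⟨R, hR, ?_⟩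
    rw [Complex.dist_eq, ← sq_lt_sq₀ (norm_nonneg _) (by positivity), ← Complex.normSq_eq_norm_sq]
    rw [Complex.normSq_apply] at hnorm ⊢
    simp only [Complex.sub_re, Complex.sub_im, Complex.ofReal_re, Complex.ofReal_im, sub_zero]
    nlinarith [mul_pos (zero_lt_one.trans_le hR) hw]

lemma monotone_ball_ofReal : Monotone fun R : ℝ => ball (R : ℂ) R := fun R S h =>
  ball_subset_ball' (by simp [Complex.dist_eq, ← Complex.ofReal_sub, abs_of_nonpos, h])

lemma nodalComponents_re_pos_eq_image_fiber (hf : f.natDegree ≠ 0) :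
    nodalComponents {z | 0 < (f.eval z).re} =
      connectedComponentIn {z | 0 < (f.eval z).re} '' fiber f 1 :=
  nodalComponents_preimage_eq_image_fiber hf (isOpen_lt continuous_const Complex.continuous_re)
    (convex_halfSpace_re_gt 0).isPreconnected (by simp : (1 : ℂ) ∈ {w : ℂ | 0 < w.re})

lemma finite_nodalComponents_re_pos (hf : f.natDegree ≠ 0) :
    (nodalComponents {z | 0 < (f.eval z).re}).Finite :=
  nodalComponents_re_pos_eq_image_fiber hf ▸ (fiber f 1).finite_toSet.image _

lemma ncard_nodalComponents_re_pos_le (hf : f.natDegree ≠ 0) :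
    (nodalComponents {z | 0 < (f.eval z).re}).ncard ≤ f.natDegree := by
  calc (nodalComponents {z | 0 < (f.eval z).re}).ncard
      ≤ (fiber f 1).card := by
        rw [nodalComponents_re_pos_eq_image_fiber hf, ← Set.ncard_coe_finset]
        exact Set.ncard_image_le (fiber f 1).finite_toSet
    _ ≤ (f - C 1).roots.card := Multiset.toFinset_card_le _
    _ = f.natDegree := by rw [IsAlgClosed.card_roots_eq_natDegree, natDegree_sub_C]

lemma natDegree_le_ncard_nodalComponents_re_pos (hf : f.natDegree ≠ 0) :
    f.natDegree ≤ (nodalComponents {z | 0 < (f.eval z).re}).ncard +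
      criticalCount f {z | 0 < (f.eval z).re} := by
  have hunion : ⋃ R : Set.Ici (1 : ℝ), f.eval ⁻¹' ball (R : ℂ) R = {z | 0 < (f.eval z).re} := by
    rw [← Set.preimage_iUnion, iUnion_ball_eq_setOf_re_pos]
    rfl
  have hmem : ∀ R : Set.Ici (1 : ℝ), (1 : ℂ) ∈ ball (R : ℂ) R :=
    fun R => monotone_ball_ofReal R.2 (by simp)
  have hmono : Monotone fun R : Set.Ici (1 : ℝ) => f.eval ⁻¹' ball (R : ℂ) R :=
    fun _ _ h => Set.preimage_mono (monotone_ball_ofReal h)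
  obtain ⟨R, hR⟩ := exists_constOnComponents_le_iUnion (F := fiber f 1) hmono.directed_le
    (fun _ => isOpen_ball.preimage f.continuous)
    (hunion ▸ fiber_subset_preimage hf (by simp : (1 : ℂ) ∈ {w : ℂ | 0 < w.re}))
  have hRpos : (0 : ℝ) < R := zero_lt_one.trans_le R.2
  have hncard : (nodalComponents (f.eval ⁻¹' ball (R : ℂ) R)).ncard ≤
      (nodalComponents {z | 0 < (f.eval z).re}).ncard := by
    rw [nodalComponents_preimage_eq_image_fiber hf isOpen_ball (convex_ball _ _).isPreconnected
      (hmem R), nodalComponents_re_pos_eq_image_fiber hf, ← finrank_constOnComponents,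
      ← finrank_constOnComponents, ← hunion]
    exact Submodule.finrank_mono hR
  have hsub : f.eval ⁻¹' ball (R : ℂ) R ⊆ {z | 0 < (f.eval z).re} := hunion ▸
    Set.subset_iUnion (fun R : Set.Ici (1 : ℝ) => f.eval ⁻¹' ball (R : ℂ) R) R
  exact (natDegree_le_ncard_nodalComponents_preimage_ball hf R hRpos).trans
    (add_le_add hncard (criticalCount_mono hsub))

lemma setOf_re_ne_zero_eq_union (f : ℂ[X]) :
    {z | (f.eval z).re ≠ 0} = {z | 0 < (f.eval z).re} ∪ {z | 0 < ((-f).eval z).re} := by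
  ext z
  simp [← lt_or_lt_iff_ne, or_comm]

lemma disjoint_setOf_re_pos_neg (f : ℂ[X]) :
    Disjoint {z | 0 < (f.eval z).re} {z | 0 < ((-f).eval z).re} :=
  Set.disjoint_left.2 fun z hz hz' => by
    rw [Set.mem_ofPred_eq, eval_neg, Complex.neg_re, neg_pos] at hz'
    exact hz'.not_gt hz

lemma ncard_nodalComponents_re_ne_zero (hf : f.natDegree ≠ 0) :
    (nodalComponents {z | (f.eval z).re ≠ 0}).ncard =
      (nodalComponents {z | 0 < (f.eval z).re}).ncard +
        (nodalComponents {z | 0 < ((-f).eval z).re}).ncard := by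
  have hopen : ∀ g : ℂ[X], IsOpen {z | 0 < (g.eval z).re} := fun g =>
    isOpen_lt continuous_const (Complex.continuous_re.comp g.continuous)
  rw [setOf_re_ne_zero_eq_union, nodalComponents_union_of_disjoint (hopen f) (hopen (-f))
    (disjoint_setOf_re_pos_neg f)]
  exact Set.ncard_union_eq (disjoint_nodalComponents (disjoint_setOf_re_pos_neg f))
    (finite_nodalComponents_re_pos hf) (finite_nodalComponents_re_pos (natDegree_neg f ▸ hf))

lemma natDegree_lt_ncard_nodalComponents_re_ne_zero (hf : f.natDegree ≠ 0) :
    f.natDegree < (nodalComponents {z | (f.eval z).re ≠ 0}).ncard := by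
  have hpos := natDegree_le_ncard_nodalComponents_re_pos hf
  have hneg := natDegree_le_ncard_nodalComponents_re_pos (natDegree_neg f ▸ hf)
  rw [natDegree_neg, criticalCount_neg] at hneg
  have hcrit := criticalCount_union (f := f) (disjoint_setOf_re_pos_neg f)
  have := criticalCount_le f ({z | 0 < (f.eval z).re} ∪ {z | 0 < ((-f).eval z).re})
  rw [ncard_nodalComponents_re_ne_zero hf]
  lia

lemma ncard_nodalComponents_re_ne_zero_le (hf : f.natDegree ≠ 0) :
    (nodalComponents {z | (f.eval z).re ≠ 0}).ncard ≤ 2 * f.natDegree := by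
  have hpos := ncard_nodalComponents_re_pos_le hf
  have hneg := ncard_nodalComponents_re_pos_le (natDegree_neg f ▸ hf)
  rw [natDegree_neg] at hneg
  rw [ncard_nodalComponents_re_ne_zero hf]
  lia

end HalfPlanes

section HarmonicPolynomials

lemma derivation_aeval {R σ A M : Type*} [Fintype σ] [CommSemiring R] [CommSemiring A]
    [Algebra R A] [AddCommMonoid M] [Module A M] [Module R M] (D : Derivation R A M) (g : σ → A)
    (P : MvPolynomial σ R) :
    D (MvPolynomial.aeval g P) =
      ∑ j, MvPolynomial.aeval g (MvPolynomial.pderiv j P) • D (g j) := by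
  classical
  induction P using MvPolynomial.induction_on with
  | C a => simp
  | add P Q hP hQ => simp only [map_add, hP, hQ, add_smul, Finset.sum_add_distrib]
  | mul_X P j hP =>
    simp only [map_mul, map_add, MvPolynomial.aeval_X, Derivation.leibniz, hP,
      MvPolynomial.pderiv_X, smul_eq_mul, add_smul, Finset.sum_add_distrib, Finset.smul_sum,
      mul_smul]
    simp [Pi.single_apply, ite_smul]

lemma pderiv_comm {R σ : Type*} [CommSemiring R] (i j : σ) (P : MvPolynomial σ R) :
    MvPolynomial.pderiv i (MvPolynomial.pderiv j P) =
      MvPolynomial.pderiv j (MvPolynomial.pderiv i P) := by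
  ext m
  rcases eq_or_ne i j with rfl | hij
  · rfl
  simp only [MvPolynomial.coeff_pderiv, Finsupp.add_apply, Finsupp.single_eq_of_ne hij,
    Finsupp.single_eq_of_ne hij.symm, add_zero, add_right_comm, mul_right_comm]

lemma aeval_pair_of_pderiv_pderiv_eq_zero {R A : Type*} [CommRing R] [IsDomain R] [CharZero R]
    [CommRing A] [Algebra R A] {Q : MvPolynomial (Fin 2) R}
    (hQ : MvPolynomial.pderiv 0 (MvPolynomial.pderiv 1 Q) = 0) (z w : A) :
    MvPolynomial.aeval ![z, w] Q = MvPolynomial.aeval ![z, 0] Q + MvPolynomial.aeval ![0, w] Q -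
      MvPolynomial.aeval ![(0 : A), 0] Q := by
  have hexp : ∀ m ∈ Q.support, m 0 = 0 ∨ m 1 = 0 := by
    intro m hm
    by_contra! h
    have hcoeff := congrArg (MvPolynomial.coeff (m - Finsupp.single 0 1 - Finsupp.single 1 1)) hQ
    have hm' : m - Finsupp.single 0 1 - Finsupp.single 1 1 + Finsupp.single 0 1 +
        Finsupp.single 1 1 = m := by
      ext i
      fin_cases i
      · simp [Nat.sub_add_cancel (Nat.one_le_iff_ne_zero.2 h.1)]
      · simp [Nat.sub_add_cancel (Nat.one_le_iff_ne_zero.2 h.2)]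
    rw [MvPolynomial.coeff_pderiv, MvPolynomial.coeff_pderiv, hm'] at hcoeff
    simp [MvPolynomial.mem_support_iff.1 hm, Nat.cast_add_one_ne_zero] at hcoeff
  simp only [MvPolynomial.aeval_def, MvPolynomial.eval₂_eq', Fin.prod_univ_two]
  rw [← Finset.sum_add_distrib, ← Finset.sum_sub_distrib]
  refine Finset.sum_congr rfl fun m hm => ?_
  rcases hexp m hm with h | h <;> simp [h]

/-- The real coordinates `x = (z + w) / 2` and `y = (z - w) / (2i)` as polynomials in two
independent complex variables `z, w`, where `w` plays the role of the conjugate of `z`. -/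
noncomputable def realCoordinates : Fin 2 → MvPolynomial (Fin 2) ℂ :=
  ![(1 / 2 : ℂ) • (MvPolynomial.X 0 + MvPolynomial.X 1),
    (-Complex.I / 2) • (MvPolynomial.X 0 - MvPolynomial.X 1)]

/-- The polynomial `P((z + w) / 2, (z - w) / (2i))` restricted to `w = 0`: for harmonic `P` this
is the holomorphic summand of `P(x, y)`, with `z = x + iy`. -/
noncomputable def holomorphicPart (P : MvPolynomial (Fin 2) ℝ) : ℂ[X] :=
  MvPolynomial.aeval ![X, 0] (MvPolynomial.aeval realCoordinates P)

variable {P : MvPolynomial (Fin 2) ℝ}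

lemma pderiv_zero_aeval_realCoordinates (P : MvPolynomial (Fin 2) ℝ) :
    MvPolynomial.pderiv 0 (MvPolynomial.aeval realCoordinates P) =
      (1 / 2 : ℂ) • MvPolynomial.aeval realCoordinates (MvPolynomial.pderiv 0 P) +
        (-Complex.I / 2) • MvPolynomial.aeval realCoordinates (MvPolynomial.pderiv 1 P) := by
  have hchain := derivation_aeval ((MvPolynomial.pderiv 0).restrictScalars ℝ) realCoordinates P
  simpa [realCoordinates, MvPolynomial.pderiv_X] using hchain

lemma pderiv_one_aeval_realCoordinates (P : MvPolynomial (Fin 2) ℝ) :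
    MvPolynomial.pderiv 1 (MvPolynomial.aeval realCoordinates P) =
      (1 / 2 : ℂ) • MvPolynomial.aeval realCoordinates (MvPolynomial.pderiv 0 P) -
        (-Complex.I / 2) • MvPolynomial.aeval realCoordinates (MvPolynomial.pderiv 1 P) := by
  have hchain := derivation_aeval ((MvPolynomial.pderiv 1).restrictScalars ℝ) realCoordinates P
  simpa [realCoordinates, MvPolynomial.pderiv_X, sub_eq_add_neg] using hchain

lemma pderiv_pderiv_aeval_realCoordinates (P : MvPolynomial (Fin 2) ℝ) :
    MvPolynomial.pderiv 0 (MvPolynomial.pderiv 1 (MvPolynomial.aeval realCoordinates P)) =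
      (1 / 4 : ℂ) • MvPolynomial.aeval realCoordinates
        (∑ i, MvPolynomial.pderiv i (MvPolynomial.pderiv i P)) := by
  have hI : (-Complex.I / 2) * (-Complex.I / 2) = -(1 / 4) := by
    rw [div_mul_div_comm, neg_mul_neg, Complex.I_mul_I]
    norm_num
  simp only [pderiv_one_aeval_realCoordinates, pderiv_zero_aeval_realCoordinates, map_sub,
    Derivation.map_smul, pderiv_comm (1 : Fin 2) 0, Fin.sum_univ_two, map_add, smul_add, smul_smul,
    hI]
  rw [mul_comm (-Complex.I / 2)]
  module

lemma aeval_aeval_realCoordinates {A : Type*} [CommRing A] [Algebra ℂ A] [Algebra ℝ A]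
    [IsScalarTower ℝ ℂ A] (z w : A) (P : MvPolynomial (Fin 2) ℝ) :
    MvPolynomial.aeval ![z, w] (MvPolynomial.aeval realCoordinates P) =
      MvPolynomial.aeval ![(1 / 2 : ℂ) • (z + w), (-Complex.I / 2) • (z - w)] P := by
  have hcomp := MvPolynomial.comp_aeval_apply realCoordinates
    ((MvPolynomial.aeval (R := ℂ) ![z, w]).restrictScalars ℝ) P
  rw [AlgHom.restrictScalars_apply] at hcomp
  rw [hcomp]
  congr 2
  ext i
  fin_cases i <;> simp [realCoordinates]

lemma map_conj_holomorphicPart (P : MvPolynomial (Fin 2) ℝ) :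
    (holomorphicPart P).map (starRingEnd ℂ) =
      MvPolynomial.aeval ![0, X] (MvPolynomial.aeval realCoordinates P) := by
  have hcomp := MvPolynomial.comp_aeval_apply
    ![(1 / 2 : ℂ) • (X + 0 : ℂ[X]), (-Complex.I / 2) • (X - 0)]
    (mapAlgHom Complex.conjAe.toAlgHom) P
  rw [holomorphicPart, aeval_aeval_realCoordinates, aeval_aeval_realCoordinates]
  refine hcomp.trans ?_
  congr 2
  ext1 i
  fin_cases i <;> simp [smul_eq_C_mul, Complex.conj_ofNat, neg_div]

section Algebra

variable {A : Type*} [CommRing A] [Algebra ℂ A]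

lemma aeval_holomorphicPart (z : A) (P : MvPolynomial (Fin 2) ℝ) :
    aeval z (holomorphicPart P) =
      MvPolynomial.aeval ![z, 0] (MvPolynomial.aeval realCoordinates P) := by
  rw [holomorphicPart, MvPolynomial.comp_aeval_apply]
  congr 2
  ext i
  fin_cases i <;> simp

lemma aeval_map_conj_holomorphicPart (w : A) (P : MvPolynomial (Fin 2) ℝ) :
    aeval w ((holomorphicPart P).map (starRingEnd ℂ)) =
      MvPolynomial.aeval ![0, w] (MvPolynomial.aeval realCoordinates P) := by
  rw [map_conj_holomorphicPart, MvPolynomial.comp_aeval_apply]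
  congr 2
  ext i
  fin_cases i <;> simp

lemma aeval_eq_of_isHarmonicPoly [Algebra ℝ A] [IsScalarTower ℝ ℂ A] (hP : IsHarmonicPoly P)
    (x y : A) :
    MvPolynomial.aeval ![x, y] P =
      aeval (x + Complex.I • y) (holomorphicPart P) +
        aeval (x - Complex.I • y) ((holomorphicPart P).map (starRingEnd ℂ)) -
          algebraMap ℝ A (MvPolynomial.constantCoeff P) := by
  set z := x + Complex.I • y with hz
  set w := x - Complex.I • y with hw
  have hmixed : MvPolynomial.pderiv 0
      (MvPolynomial.pderiv 1 (MvPolynomial.aeval realCoordinates P)) = 0 := by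
    rw [pderiv_pderiv_aeval_realCoordinates, hP, map_zero, smul_zero]
  have hx : (1 / 2 : ℂ) • (z + w) = x := by
    rw [hz, hw]
    module
  have hy : (-Complex.I / 2) • (z - w) = y := by
    rw [hz, hw, add_sub_sub_cancel, ← two_smul ℂ, smul_smul, smul_smul]
    simp
  have hconst : MvPolynomial.aeval ![(0 : A), 0] (MvPolynomial.aeval realCoordinates P) =
      algebraMap ℝ A (MvPolynomial.constantCoeff P) := by
    rw [aeval_aeval_realCoordinates, add_zero, sub_zero, smul_zero, smul_zero,
      ← MvPolynomial.aeval_zero]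
    congr 2
    ext i
    fin_cases i <;> rfl
  rw [aeval_holomorphicPart, aeval_map_conj_holomorphicPart, ← hconst,
    ← aeval_pair_of_pderiv_pderiv_eq_zero hmixed, aeval_aeval_realCoordinates, hx, hy]

end Algebra

lemma natDegree_holomorphicPart_le (P : MvPolynomial (Fin 2) ℝ) :
    (holomorphicPart P).natDegree ≤ P.totalDegree := by
  rw [holomorphicPart, aeval_aeval_realCoordinates, ← MvPolynomial.aeval_map_algebraMap ℂ,
    ← mul_one P.totalDegree]
  refine MvPolynomial.aeval_natDegree_le _
    (Finset.sup_mono (MvPolynomial.support_map_subset _ _)) _ fun i => ?_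
  fin_cases i <;> simp [(natDegree_smul_le _ _).trans natDegree_X_le]

lemma totalDegree_aeval_le {R σ : Type*} [CommSemiring R] (Q : MvPolynomial σ R) (f : R[X]) :
    (aeval Q f).totalDegree ≤ f.natDegree * Q.totalDegree := by
  rw [aeval_eq_sum_range]
  refine MvPolynomial.totalDegree_finsetSum_le fun i hi => ?_
  calc (f.coeff i • Q ^ i).totalDegree
      ≤ (Q ^ i).totalDegree := MvPolynomial.totalDegree_smul_le _ _
    _ ≤ i * Q.totalDegree := MvPolynomial.totalDegree_pow _ _
    _ ≤ f.natDegree * Q.totalDegree :=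
      Nat.mul_le_mul_right _ (Finset.mem_range_succ_iff.1 hi)

lemma totalDegree_le_natDegree_holomorphicPart (hP : IsHarmonicPoly P) :
    P.totalDegree ≤ (holomorphicPart P).natDegree := by
  set x : MvPolynomial (Fin 2) ℂ := MvPolynomial.X 0
  set y : MvPolynomial (Fin 2) ℂ := MvPolynomial.X 1
  have hx : x.totalDegree ≤ 1 := (MvPolynomial.totalDegree_X _).le
  have hy : (Complex.I • y).totalDegree ≤ 1 :=
    (MvPolynomial.totalDegree_smul_le _ _).trans (MvPolynomial.totalDegree_X _).le
  have hdeg : ∀ (f : ℂ[X]) {Q : MvPolynomial (Fin 2) ℂ}, Q.totalDegree ≤ 1 →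
      (aeval Q f).totalDegree ≤ f.natDegree := fun f Q hQ =>
    (totalDegree_aeval_le Q f).trans (mul_le_of_le_one_right' hQ)
  have hmap : MvPolynomial.map (algebraMap ℝ ℂ) P = MvPolynomial.aeval ![x, y] P := by
    rw [← MvPolynomial.aeval_X_left_apply (MvPolynomial.map (algebraMap ℝ ℂ) P),
      MvPolynomial.aeval_map_algebraMap]
    congr 2
    ext1 i
    fin_cases i <;> rfl
  calc P.totalDegree = (MvPolynomial.map (algebraMap ℝ ℂ) P).totalDegree := by
        rw [MvPolynomial.totalDegree, MvPolynomial.totalDegree,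
          MvPolynomial.support_map_of_injective P (algebraMap ℝ ℂ).injective]
    _ ≤ (holomorphicPart P).natDegree := by
      rw [hmap, aeval_eq_of_isHarmonicPoly hP]
      refine (MvPolynomial.totalDegree_sub _ _).trans (max_le ?_ ?_)
      · refine (MvPolynomial.totalDegree_add _ _).trans (max_le ?_ ?_)
        · exact hdeg _ ((MvPolynomial.totalDegree_add _ _).trans (max_le hx hy))
        · exact (hdeg _ ((MvPolynomial.totalDegree_sub _ _).trans (max_le hx hy))).trans
            natDegree_map_le
      · exact (MvPolynomial.totalDegree_C _).trans_le (Nat.zero_le _)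

lemma exists_polynomial_re_eq_eval (hP : IsHarmonicPoly P) :
    ∃ f : ℂ[X], f.natDegree = P.totalDegree ∧
      ∀ z, (f.eval z).re = MvPolynomial.eval ![z.re, z.im] P := by
  refine ⟨C 2 * holomorphicPart P - C ((MvPolynomial.constantCoeff P : ℝ) : ℂ), ?_, fun z => ?_⟩
  · rw [natDegree_sub_C, natDegree_C_mul two_ne_zero]
    exact (natDegree_holomorphicPart_le P).antisymm (totalDegree_le_natDegree_holomorphicPart hP)
  · have hsplit := aeval_eq_of_isHarmonicPoly hP (z.re : ℂ) z.im
    have hconj : (z.re : ℂ) - Complex.I • (z.im : ℂ) = starRingEnd ℂ z := by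
      apply Complex.ext <;> simp
    have hz : (z.re : ℂ) + Complex.I • (z.im : ℂ) = z := by
      rw [smul_eq_mul, mul_comm, Complex.re_add_im]
    have hreal : MvPolynomial.aeval ![(z.re : ℂ), z.im] P =
        (MvPolynomial.eval ![z.re, z.im] P : ℝ) := by
      rw [← Complex.coe_algebraMap, ← MvPolynomial.aeval_eq_eval,
        ← MvPolynomial.aeval_algebraMap_apply]
      congr 2
      ext1 i
      fin_cases i <;> rfl
    rw [hconj, hz, hreal, coe_aeval_eq_eval, coe_aeval_eq_eval, eval_map, eval₂_at_apply] at hsplit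
    have hre := congrArg Complex.re hsplit
    simp only [Complex.coe_algebraMap, Complex.sub_re, Complex.add_re, Complex.conj_re,
      Complex.ofReal_re] at hre
    rw [hre, eval_sub, eval_C_mul, eval_C, two_mul, Complex.sub_re, Complex.add_re,
      Complex.ofReal_re]

end HarmonicPolynomials

/-- **Remark after Proposition 5.3**: for a nonconstant harmonic polynomial of degree `d` on
ℝ² whose set `{u ≠ 0}` has `k` connected components, one has `k/2 ≤ d ≤ k - 1`
(equivalently `k ≤ 2d` and `d + 1 ≤ k`), and both equalities hold simultaneously
if and only if `d = 1`. -/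
theorem degree_components_bounds (d k : ℕ) (hd : 1 ≤ d)
    (P : MvPolynomial (Fin 2) ℝ) (hP : IsHarmonicPoly P) (hdeg : P.totalDegree = d)
    (hfin : (nodalComponents {x | polyFun P x ≠ 0}).Finite)
    (hcard : (nodalComponents {x | polyFun P x ≠ 0}).ncard = k) :
    k ≤ 2 * d ∧ d + 1 ≤ k ∧ ((k = 2 * d ∧ k = d + 1) ↔ d = 1) := by
  obtain ⟨f, hfdeg, hf⟩ := exists_polynomial_re_eq_eval hP
  let e : ℂ ≃ₜ EuclideanSpace ℝ (Fin 2) := Complex.orthonormalBasisOneI.repr.toHomeomorph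
  have heval : ∀ z, polyFun P (e z) = (f.eval z).re := fun z => (hf z).symm
  have himage : {x | polyFun P x ≠ 0} = e '' {z | (f.eval z).re ≠ 0} := by
    simp only [← heval]
    exact (Set.image_preimage_eq _ e.surjective).symm
  rw [himage, nodalComponents_image_homeomorph,
    Set.ncard_image_of_injective _ e.injective.image_injective] at hcard
  have hf0 : f.natDegree ≠ 0 := by lia
  have hlower := natDegree_lt_ncard_nodalComponents_re_ne_zero hf0
  have hupper := ncard_nodalComponents_re_ne_zero_le hf0
  lia
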